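/- There exist constants c₁, c₂ > 0 such that for all sufficiently large X, c₁·X^{1/2} ≤ #{(A,B) ∈ ℤ² : 4A³ + 27B² ≠ 0, for every prime p (p⁴ ∣ A implies p⁶ ∤ B), max(|A|³, |B|²) ≤ X⁶, and the elliptic curve E_{A,B}: y² = x³ + Ax + B has a rational point of order 7} ≤ c₂·X^{1/2}. -/

import Mathlib

/-- The elliptic curve `y² = x³ + Ax + B` over `ℚ`. -/
noncomputable def EAB (A B : ℤ) : WeierstrassCurve.Affine ℚ :=
  { a₁ := 0, a₂ := 0, a₃ := 0, a₄ := (A : ℚ), a₆ := (B : ℚ) }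

namespace SevenTorsion

/-- The invariant `c₄` of the universal curve over `X₁(7)`, homogenized (degree 8). -/
def c4 {R : Type*} [CommRing R] (t s : R) : R :=
  (s ^ 2 + t * s - t ^ 2) ^ 4 - 8 * (s ^ 2 + t * s - t ^ 2) ^ 2 * (t ^ 3 * s - t ^ 2 * s ^ 2)
    + 16 * (t ^ 3 * s - t ^ 2 * s ^ 2) ^ 2
    + 24 * (s ^ 2 + t * s - t ^ 2) * ((t ^ 3 * s - t ^ 2 * s ^ 2) * s ^ 2)

/-- The invariant `c₆` of the universal curve over `X₁(7)`, homogenized (degree 12). -/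
def c6 {R : Type*} [CommRing R] (t s : R) : R :=
  -((s ^ 2 + t * s - t ^ 2) ^ 2 - 4 * (t ^ 3 * s - t ^ 2 * s ^ 2)) ^ 3
    - 36 * ((s ^ 2 + t * s - t ^ 2) ^ 2 - 4 * (t ^ 3 * s - t ^ 2 * s ^ 2)) *
      ((s ^ 2 + t * s - t ^ 2) * ((t ^ 3 * s - t ^ 2 * s ^ 2) * s ^ 2))
    - 216 * ((t ^ 3 * s - t ^ 2 * s ^ 2) * s ^ 2) ^ 2

/-- The short Weierstrass coefficient `A` of the universal curve. -/
def FF {R : Type*} [CommRing R] (t s : R) : R := -27 * c4 t s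

/-- The short Weierstrass coefficient `B` of the universal curve. -/
def GG {R : Type*} [CommRing R] (t s : R) : R := -54 * c6 t s

lemma cast_FF (t s : ℤ) : ((FF t s : ℤ) : ℚ) = FF (t : ℚ) (s : ℚ) := by
  simp [FF, c4]

lemma cast_GG (t s : ℤ) : ((GG t s : ℤ) : ℚ) = GG (t : ℚ) (s : ℚ) := by
  simp [GG, c6]

lemma FF_scale (d s : ℚ) : FF (d * s) s = s ^ 8 * FF d 1 := by
  simp only [FF, c4]; ring

lemma GG_scale (d s : ℚ) : GG (d * s) s = s ^ 12 * GG d 1 := by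
  simp only [GG, c6]; ring

lemma disc_eq {R : Type*} [CommRing R] (t s : R) : 4 * FF t s ^ 3 + 27 * GG t s ^ 2
    = -(2 ^ 8 * 3 ^ 12) * (t ^ 7 * s ^ 7 * (t - s) ^ 7 *
      (t ^ 3 - 8 * t ^ 2 * s + 5 * t * s ^ 2 + s ^ 3)) := by
  simp only [FF, GG, c4, c6]; ring

open WeierstrassCurve.Affine in
/-- Doubling formula on a short Weierstrass curve. -/
lemma dbl_pt {A B : ℤ} {x y x3 y3 l : ℚ} (h : (EAB A B).Nonsingular x y) (hy : y ≠ 0)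
    (hl : l * (2 * y) = 3 * x ^ 2 + A) (hx3 : x3 = l ^ 2 - 2 * x)
    (hy3 : y3 = -(l * (x3 - x) + y)) :
    ∃ h3, Point.some x y h + Point.some x y h = Point.some (W' := EAB A B) x3 y3 h3 := by
  have hne : y ≠ (EAB A B).negY x y := by
    simp only [negY, EAB]
    intro h; apply hy; linarith
  have hs : (EAB A B).slope x x y y = l := by
    rw [slope_of_Y_ne rfl hne]
    have : y - (EAB A B).negY x y = 2 * y := by simp only [negY, EAB]; ring
    rw [this, div_eq_iff (by simpa using hy)]
    simp only [EAB]; rw [hl]; ring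
  have e1 : (EAB A B).addX x x l = x3 := by simp only [addX, EAB]; rw [hx3]; ring
  have e2 : (EAB A B).addY x x y l = y3 := by
    simp only [addY, negAddY, e1, negY]; simp only [EAB]; rw [hy3]; ring
  rw [Point.add_self_of_Y_ne hne]
  simp only [hs, e1, e2]
  have := nonsingular_add h h (fun hxy => hne hxy.right)
  rw [hs, e1, e2] at this
  exact ⟨this, trivial⟩

open WeierstrassCurve.Affine in
/-- Chord addition formula on a short Weierstrass curve. -/
lemma add_pt {A B : ℤ} {x1 y1 x2 y2 x3 y3 l : ℚ} (h1 : (EAB A B).Nonsingular x1 y1)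
    (h2 : (EAB A B).Nonsingular x2 y2) (hx : x1 ≠ x2)
    (hl : l * (x1 - x2) = y1 - y2) (hx3 : x3 = l ^ 2 - x1 - x2)
    (hy3 : y3 = -(l * (x3 - x1) + y1)) :
    ∃ h3, Point.some x1 y1 h1 + Point.some x2 y2 h2 = Point.some (W' := EAB A B) x3 y3 h3 := by
  have hs : (EAB A B).slope x1 x2 y1 y2 = l := by
    rw [slope_of_X_ne hx, div_eq_iff (sub_ne_zero.2 hx), hl]
  have e1 : (EAB A B).addX x1 x2 l = x3 := by simp only [addX, EAB]; rw [hx3]; ring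
  have e2 : (EAB A B).addY x1 x2 y1 l = y3 := by
    simp only [addY, negAddY, e1, negY]; simp only [EAB]; rw [hy3]; ring
  rw [Point.add_of_X_ne hx]
  simp only [hs, e1, e2]
  have := nonsingular_add h1 h2 (fun hxy => hx hxy.left)
  rw [hs, e1, e2] at this
  exact ⟨this, trivial⟩

/-- `x`-coordinate transported from Tate normal form. -/
def tx (u b c X : ℚ) : ℚ := u ^ 2 * (X + ((1 - c) ^ 2 - 4 * b) / 12)
/-- `y`-coordinate transported from Tate normal form. -/
def ty (u b c X Y : ℚ) : ℚ := u ^ 3 * (Y + ((1 - c) * X - b) / 2)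
/-- `a₄` of the short form of the Tate curve. -/
def tA (u b c : ℚ) : ℚ := -u ^ 4 * (((1 - c) ^ 2 - 4 * b) ^ 2 + 24 * (1 - c) * b) / 48
/-- `a₆` of the short form of the Tate curve. -/
def tB (u b c : ℚ) : ℚ := -u ^ 6 * (-((1 - c) ^ 2 - 4 * b) ^ 3
  - 36 * ((1 - c) ^ 2 - 4 * b) * ((1 - c) * b) - 216 * b ^ 2) / 864

open WeierstrassCurve.Affine in
lemma mult2 {A B : ℤ} {u b c : ℚ} (hu : u ≠ 0) (hb : b ≠ 0) (hA : (A : ℚ) = tA u b c)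
    (h : (EAB A B).Nonsingular (tx u b c 0) (ty u b c 0 0)) :
    ∃ h2, Point.some _ _ h + Point.some _ _ h
      = Point.some (W' := EAB A B) (tx u b c b) (ty u b c b (b * c)) h2 := by
  refine dbl_pt (l := u * (1 - c) / 2) h ?_ ?_ ?_ ?_
  · simp only [ty]; simp [hu, hb]
  · rw [hA]; simp only [tx, ty, tA]; ring
  · simp only [tx]; ring
  · simp only [tx, ty]; ring

open WeierstrassCurve.Affine in
lemma mult3 {A B : ℤ} {u b c : ℚ} (hu : u ≠ 0) (hb : b ≠ 0)
    (h : (EAB A B).Nonsingular (tx u b c 0) (ty u b c 0 0))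
    (h2 : (EAB A B).Nonsingular (tx u b c b) (ty u b c b (b * c))) :
    ∃ h3, Point.some _ _ h + Point.some _ _ h2
      = Point.some (W' := EAB A B) (tx u b c c) (ty u b c c (b - c)) h3 := by
  refine add_pt (l := u * (c + (1 - c) / 2)) h h2 ?_ ?_ ?_ ?_
  · simp only [tx]; intro h
    have : u ^ 2 * b = 0 := by linarith
    simp [hu, hb] at this
  · simp only [tx, ty]; ring
  · simp only [tx]; ring
  · simp only [tx, ty]; ring

open WeierstrassCurve.Affine in
lemma mult4 {A B : ℤ} {u c d : ℚ} (hu : u ≠ 0) (hd : d ≠ 0) (hc : c ≠ 0)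
    (hA : (A : ℚ) = tA u (c * d) c)
    (h2 : (EAB A B).Nonsingular (tx u (c * d) c (c * d)) (ty u (c * d) c (c * d) (c * d * c))) :
    ∃ h4, Point.some _ _ h2 + Point.some _ _ h2
      = Point.some (W' := EAB A B) (tx u (c * d) c (d ^ 2 - d))
        (ty u (c * d) c (d ^ 2 - d) (d ^ 2 * (c - d + 1))) h4 := by
  refine dbl_pt (l := u * (d - 1 + c + (1 - c) / 2)) h2 ?_ ?_ ?_ ?_
  · simp only [ty]
    have : u ^ 3 * (c * d * c + ((1 - c) * (c * d) - c * d) / 2) = u ^ 3 * c ^ 2 * d / 2 := by ring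
    rw [this]; simp [hu, hd, hc]
  · rw [hA]; simp only [tx, ty, tA]; ring
  · simp only [tx]; ring
  · simp only [tx, ty]; ring

lemma tA_eq (u d : ℚ) : tA (6 * u) (d ^ 3 - d ^ 2) (d ^ 2 - d) = u ^ 4 * FF d 1 := by
  simp only [tA, FF, c4]; ring

lemma tB_eq (u d : ℚ) : tB (6 * u) (d ^ 3 - d ^ 2) (d ^ 2 - d) = u ^ 6 * GG d 1 := by
  simp only [tB, GG, c6]; ring

open WeierstrassCurve.Affine in
/-- Curves in the universal family have a point of order 7. -/
lemma exists_point {A B : ℤ} {u d : ℚ} (hu : u ≠ 0) (hd : d ≠ 0) (hd1 : d ≠ 1)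
    (hA : (A : ℚ) = u ^ 4 * FF d 1) (hB : (B : ℚ) = u ^ 6 * GG d 1)
    (hD : 4 * A ^ 3 + 27 * B ^ 2 ≠ 0) : ∃ P : (EAB A B).Point, P ≠ 0 ∧ 7 • P = 0 := by
  rw [← tA_eq] at hA
  rw [← tB_eq] at hB
  have hu6 : 6 * u ≠ 0 := by simpa using hu
  have hc0 : d ^ 2 - d ≠ 0 := by
    rw [show d ^ 2 - d = d * (d - 1) by ring]
    exact mul_ne_zero hd (sub_ne_zero.2 hd1)
  have hbc : d ^ 3 - d ^ 2 = (d ^ 2 - d) * d := by ring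
  generalize 6 * u = v at *
  rw [hbc] at hA hB
  obtain ⟨c, hc⟩ : ∃ c, c = d ^ 2 - d := ⟨_, rfl⟩
  rw [← hc] at hA hB hc0
  have hb0 : c * d ≠ 0 := mul_ne_zero hc0 hd
  have hΔ : (EAB A B).Δ ≠ 0 := by
    have : (EAB A B).Δ = ((-16 * (4 * A ^ 3 + 27 * B ^ 2) : ℤ) : ℚ) := by
      simp only [WeierstrassCurve.Δ, WeierstrassCurve.b₂, WeierstrassCurve.b₄, WeierstrassCurve.b₆,
        WeierstrassCurve.b₈, EAB]
      push_cast; ring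
    rw [this]
    exact_mod_cast mul_ne_zero (by norm_num) hD
  have h : (EAB A B).Nonsingular (tx v (c * d) c 0) (ty v (c * d) c 0 0) := by
    rw [← equation_iff_nonsingular_of_Δ_ne_zero hΔ, equation_iff]
    simp only [EAB]
    rw [hA, hB]
    simp only [tx, ty, tA, tB]; ring
  obtain ⟨h2, e2⟩ := mult2 hu6 hb0 hA h
  obtain ⟨h3, e3⟩ := mult3 hu6 hb0 h h2
  obtain ⟨h4, e4⟩ := mult4 hu6 hd hc0 hA h2
  refine ⟨Point.some _ _ h, Point.some_ne_zero h, ?_⟩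
  have key : Point.some _ _ h3 + Point.some _ _ h4 = 0 := by
    apply Point.add_of_Y_eq
    · rw [hc]
    · simp only [negY]; simp only [EAB, ty]; rw [hc]; ring
  rw [← e3, ← e4, ← e2] at key
  rw [← key]; abel

open WeierstrassCurve.Affine in
/-- Every curve with a point of order 7 is in the universal family. -/
lemma of_point {A B : ℤ} (P : (EAB A B).Point) (hP : P ≠ 0) (h7 : 7 • P = 0) :
    ∃ u d : ℚ, (A : ℚ) = u ^ 4 * FF d 1 ∧ (B : ℚ) = u ^ 6 * GG d 1 := by
  have n2 : P + P ≠ 0 := fun h => hP (by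
    have : 7 • P = 3 • (P + P) + P := by abel
    rw [h7, h] at this; simpa using this.symm)
  have n3 : P + (P + P) ≠ 0 := fun h => hP (by
    have : 7 • P = 2 • (P + (P + P)) + P := by abel
    rw [h7, h] at this; simpa using this.symm)
  have n4 : P + P + (P + P) ≠ 0 := fun h => hP (by
    have : P + 7 • P = 2 • (P + P + (P + P)) := by abel
    rw [h7, h] at this; simpa using this)
  have e7 : P + (P + P) = -(P + P + (P + P)) := by
    rw [eq_neg_iff_add_eq_zero, ← h7]; abel
  rcases P with _ | ⟨x0, y0, h⟩
  · exact absurd rfl hP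
  have hy0 : y0 ≠ 0 := by
    rintro rfl
    exact n2 (Point.add_self_of_Y_eq (by simp only [negY, EAB]; ring))
  obtain ⟨l, hl⟩ : ∃ l : ℚ, l * (2 * y0) = 3 * x0 ^ 2 + A :=
    ⟨(3 * x0 ^ 2 + A) / (2 * y0), div_mul_cancel₀ _ (by simpa using hy0)⟩
  have heq := h.1
  rw [equation_iff] at heq
  simp only [EAB] at heq
  have ha : 3 * x0 - l ^ 2 ≠ 0 := by
    intro ha
    obtain ⟨h2, e2⟩ := dbl_pt (x3 := x0) (y3 := -y0) h hy0 hl (by linarith) (by ring)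
    rw [e2] at n3
    exact n3 (Point.add_of_Y_eq rfl (by simp only [negY, EAB]; ring))
  obtain ⟨a, haa⟩ : ∃ a, a = 3 * x0 - l ^ 2 := ⟨_, rfl⟩
  rw [← haa] at ha
  obtain ⟨u, hu⟩ : ∃ u, u = 2 * y0 / a := ⟨_, rfl⟩
  have hu0 : u ≠ 0 := by rw [hu]; exact div_ne_zero (by simpa using hy0) ha
  obtain ⟨b, hb⟩ : ∃ b, b = - a / u ^ 2 := ⟨_, rfl⟩
  have hb0 : b ≠ 0 := by rw [hb]; exact div_ne_zero (by simpa using ha) (pow_ne_zero _ hu0)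
  obtain ⟨c, hc⟩ : ∃ c, c = 1 - 2 * l / u := ⟨_, rfl⟩
  have r1 : a = -b * u ^ 2 := by rw [hb]; field_simp
  have r2 : y0 = -b * u ^ 3 / 2 := by
    have : y0 = u * a / 2 := by rw [hu]; field_simp
    rw [this, r1]; ring
  have r3 : l = u * (1 - c) / 2 := by rw [hc]; field_simp; ring
  have r4 : x0 = tx u b c 0 := by
    have : x0 = (a + l ^ 2) / 3 := by rw [haa]; ring
    rw [this, r1, r3, tx]; ring
  have r5 : y0 = ty u b c 0 0 := by rw [r2, ty]; ring
  have hA : (A : ℚ) = tA u b c := by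
    have : (A : ℚ) = l * (2 * y0) - 3 * x0 ^ 2 := by rw [hl]; ring
    rw [this, r2, r3, r4, tx, tA]; ring
  have hB : (B : ℚ) = tB u b c := by
    have : (B : ℚ) = y0 ^ 2 - x0 ^ 3 - A * x0 := by linear_combination -heq
    rw [this, r2, hA, r4, tx, tA, tB]; ring
  clear heq hl haa hu hb hc r1 r2 r3 ha
  subst r4 r5
  obtain ⟨h2, e2⟩ := mult2 hu0 hb0 hA h
  obtain ⟨h3, e3⟩ := mult3 hu0 hb0 h h2
  rw [e2] at n4 e7
  rw [e3] at e7
  have hc0 : c ≠ 0 := by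
    rintro rfl
    exact n4 (Point.add_self_of_Y_eq (by simp only [negY, EAB, ty]; ring))
  obtain ⟨d, hd⟩ : ∃ d, d = b / c := ⟨_, rfl⟩
  have hbd : b = c * d := by rw [hd]; field_simp
  have hd0 : d ≠ 0 := by rw [hd]; exact div_ne_zero hb0 hc0
  subst hbd
  obtain ⟨h4, e4⟩ := mult4 hu0 hd0 hc0 hA h2
  rw [e4, Point.neg_some, Point.some.injEq] at e7
  have hx := e7.1
  simp only [tx] at hx
  have hcd : c = d ^ 2 - d := by
    have : u ^ 2 * (c - (d ^ 2 - d)) = 0 := by linarith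
    rcases mul_eq_zero.1 this with h | h
    · exact absurd h (pow_ne_zero _ hu0)
    · linarith
  refine ⟨u / 6, d, ?_, ?_⟩
  · rw [← tA_eq, hA, hcd]; congr 1 <;> ring
  · rw [← tB_eq, hB, hcd]; congr 1 <;> ring

/-- `f` is bounded like a form of degree `k`. -/
def HB (k : ℕ) (f : ℤ → ℤ → ℤ) : Prop :=
  ∃ C : ℝ, 0 ≤ C ∧ ∀ (t s : ℤ) (M : ℝ), |(t : ℝ)| ≤ M → |(s : ℝ)| ≤ M → |(f t s : ℝ)| ≤ C * M ^ k

lemma HB.add {k : ℕ} {f g : ℤ → ℤ → ℤ} (hf : HB k f) (hg : HB k g) :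
    HB k (fun t s => f t s + g t s) := by
  obtain ⟨C, hC, h⟩ := hf
  obtain ⟨D, hD, h'⟩ := hg
  refine ⟨C + D, by positivity, fun t s M ht hs => ?_⟩
  push_cast
  refine (abs_add_le _ _).trans ?_
  rw [add_mul]
  exact add_le_add (h t s M ht hs) (h' t s M ht hs)

lemma HB.mono (c : ℤ) (i j : ℕ) : HB (i + j) (fun t s => c * t ^ i * s ^ j) := by
  refine ⟨|(c : ℝ)|, abs_nonneg _, fun t s M ht hs => ?_⟩
  push_cast
  rw [abs_mul, abs_mul, abs_pow, abs_pow, pow_add, ← mul_assoc]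
  have : 0 ≤ M := (abs_nonneg _).trans ht
  gcongr

lemma HB.add_mono {k : ℕ} {f : ℤ → ℤ → ℤ} (hf : HB k f) (c : ℤ) (i j : ℕ) (h : i + j = k) :
    HB k (fun t s => f t s + c * t ^ i * s ^ j) := by
  subst h
  exact HB.add hf (HB.mono c i j)

lemma c4_expand {R : Type*} [CommRing R] (t s : R) : c4 t s = 1 * t ^ 0 * s ^ 8 + 4 * t ^ 1 * s ^ 7
    + (-14) * t ^ 2 * s ^ 6 + 35 * t ^ 4 * s ^ 4 + (-56) * t ^ 5 * s ^ 3 + 42 * t ^ 6 * s ^ 2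
    + (-12) * t ^ 7 * s ^ 1 + 1 * t ^ 8 * s ^ 0 := by
  simp only [c4]; ring

lemma c6_expand {R : Type*} [CommRing R] (t s : R) : c6 t s = (-1) * t ^ 0 * s ^ 12
    + (-6) * t ^ 1 * s ^ 11 + 15 * t ^ 2 * s ^ 10 + 46 * t ^ 3 * s ^ 9 + (-174) * t ^ 4 * s ^ 8
    + 222 * t ^ 5 * s ^ 7 + (-273) * t ^ 6 * s ^ 6 + 486 * t ^ 7 * s ^ 5 + (-570) * t ^ 8 * s ^ 4
    + 354 * t ^ 9 * s ^ 3 + (-117) * t ^ 10 * s ^ 2 + 18 * t ^ 11 * s ^ 1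
    + (-1) * t ^ 12 * s ^ 0 := by
  simp only [c6]; ring

lemma HB_c4 : HB 8 (fun t s => c4 t s) := by
  simp only [c4_expand]
  iterate 7 refine HB.add_mono ?_ _ _ _ rfl
  exact HB.mono _ 0 _

lemma HB_c6 : HB 12 (fun t s => c6 t s) := by
  simp only [c6_expand]
  iterate 12 refine HB.add_mono ?_ _ _ _ rfl
  exact HB.mono _ 0 _

/-- Bezout cofactor. -/
def U1 (t s : ℤ) : ℤ := 
  (-86718) * t ^ 0 * s ^ 11 + (-538213) * t ^ 1 * s ^ 10 + (1184537) * t ^ 2 * s ^ 9 +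
    (4196345) * t ^ 3 * s ^ 8 + (-14193432) * t ^ 4 * s ^ 7 + (16599205) * t ^ 5 * s ^ 6 +
    (-20778709) * t ^ 6 * s ^ 5 + (38254845) * t ^ 7 * s ^ 4 + (-42322212) * t ^ 8 * s ^ 3 +
    (23351603) * t ^ 9 * s ^ 2 + (-6305919) * t ^ 10 * s ^ 1 + (575487) * t ^ 11 * s ^ 0
/-- Bezout cofactor. -/
def V1 (t s : ℤ) : ℤ := 
  (-86718) * t ^ 0 * s ^ 7 + (-364777) * t ^ 1 * s ^ 6 + (1133629) * t ^ 2 * s ^ 5 +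
    (207018) * t ^ 3 * s ^ 4 + (-2955183) * t ^ 4 * s ^ 3 + (4298504) * t ^ 5 * s ^ 2 +
    (-2871141) * t ^ 6 * s ^ 1 + (574479) * t ^ 7 * s ^ 0
/-- Bezout cofactor. -/
def U2 (t s : ℤ) : ℤ := 
  (-63181) * t ^ 0 * s ^ 11 + (-693257) * t ^ 1 * s ^ 10 + (204867) * t ^ 2 * s ^ 9 +
    (6273544) * t ^ 3 * s ^ 8 + (-12066603) * t ^ 4 * s ^ 7 + (10691961) * t ^ 5 * s ^ 6 +
    (-18844497) * t ^ 6 * s ^ 5 + (31181840) * t ^ 7 * s ^ 4 + (-23670877) * t ^ 8 * s ^ 3 +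
    (8967083) * t ^ 9 * s ^ 2 + (-1492111) * t ^ 10 * s ^ 1 + (86718) * t ^ 11 * s ^ 0
/-- Bezout cofactor. -/
def V2 (t s : ℤ) : ℤ := 
  (-64189) * t ^ 0 * s ^ 7 + (-560847) * t ^ 1 * s ^ 6 + (718620) * t ^ 2 * s ^ 5 +
    (1121491) * t ^ 3 * s ^ 4 + (-2631622) * t ^ 4 * s ^ 3 + (2876111) * t ^ 5 * s ^ 2 +
    (-971803) * t ^ 6 * s ^ 1 + (86718) * t ^ 7 * s ^ 0

lemma bez1 (t s : ℤ) : U1 t s * c4 t s + V1 t s * c6 t s = 1008 * t ^ 19 := by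
  rw [c4_expand, c6_expand, U1, V1]; ring

lemma bez2 (t s : ℤ) : U2 t s * c4 t s + V2 t s * c6 t s = 1008 * s ^ 19 := by
  rw [c4_expand, c6_expand, U2, V2]; ring

lemma HB_U1 : HB 11 U1 := by
  unfold U1
  iterate 11 refine HB.add_mono ?_ _ _ _ rfl
  exact HB.mono _ 0 _
lemma HB_V1 : HB 7 V1 := by
  unfold V1
  iterate 7 refine HB.add_mono ?_ _ _ _ rfl
  exact HB.mono _ 0 _
lemma HB_U2 : HB 11 U2 := by
  unfold U2
  iterate 11 refine HB.add_mono ?_ _ _ _ rfl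
  exact HB.mono _ 0 _
lemma HB_V2 : HB 7 V2 := by
  unfold V2
  iterate 7 refine HB.add_mono ?_ _ _ _ rfl
  exact HB.mono _ 0 _

/-- The scaling factor is bounded. -/
lemma n_dvd {t s n A B : ℤ} (hts : IsCoprime t s) (hA : n ^ 4 * A = FF t s)
    (hB : n ^ 6 * B = GG t s) : n ∣ 54432 := by
  have h1 : n ∣ 54432 * t ^ 19 := by
    have := bez1 t s
    refine ⟨-(2 * U1 t s * n ^ 3 * A + V1 t s * n ^ 5 * B), ?_⟩
    rw [FF] at hA; rw [GG] at hB
    linear_combination (-54) * this + 2 * U1 t s * hA + V1 t s * hB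
  have h2 : n ∣ 54432 * s ^ 19 := by
    have := bez2 t s
    refine ⟨-(2 * U2 t s * n ^ 3 * A + V2 t s * n ^ 5 * B), ?_⟩
    rw [FF] at hA; rw [GG] at hB
    linear_combination (-54) * this + 2 * U2 t s * hA + V2 t s * hB
  obtain ⟨x, y, hxy⟩ := (IsCoprime.pow (m := 19) (n := 19) hts)
  have : (54432 : ℤ) = x * (54432 * t ^ 19) + y * (54432 * s ^ 19) := by
    linear_combination (-54432) * hxy
  rw [this]
  exact dvd_add (h1.mul_left _) (h2.mul_left _)

/-- Curves with 7-torsion are minimal twists of members of the family. -/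
lemma shape_lemma {A B : ℤ}
    (hmin : ∀ p : ℕ, p.Prime → (p : ℤ) ^ 4 ∣ A → ¬ (p : ℤ) ^ 6 ∣ B)
    (hP : ∃ P : (EAB A B).Point, P ≠ 0 ∧ 7 • P = 0) :
    ∃ t s n : ℤ, 0 < n ∧ n ≤ 54432 ∧ n ^ 4 * A = FF t s ∧ n ^ 6 * B = GG t s := by
  obtain ⟨P, hP0, h7⟩ := hP
  obtain ⟨u, d, hA, hB⟩ := of_point P hP0 h7
  have hs0 : (d.den : ℚ) ≠ 0 := by exact_mod_cast d.den_nz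
  obtain ⟨w, hw⟩ : ∃ w : ℚ, w = u / d.den ^ 2 := ⟨_, rfl⟩
  have hu : u = w * d.den ^ 2 := by rw [hw]; field_simp
  have hd : d * d.den = d.num := Rat.mul_den_eq_num d
  have hA' : (A : ℚ) = w ^ 4 * FF (d.num : ℚ) (d.den : ℚ) := by
    rw [← hd, FF_scale, hA, hu]; ring
  have hB' : (B : ℚ) = w ^ 6 * GG (d.num : ℚ) (d.den : ℚ) := by
    rw [← hd, GG_scale, hB, hu]; ring
  have hwd : w * w.den = w.num := Rat.mul_den_eq_num w
  have hAi : (w.den : ℤ) ^ 4 * A = w.num ^ 4 * FF d.num (d.den : ℤ) := by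
    have : (w.den : ℚ) ^ 4 * A = w.num ^ 4 * FF (d.num : ℚ) (d.den : ℚ) := by
      rw [← hwd, hA']; ring
    have h2 := cast_FF d.num (d.den : ℤ)
    push_cast at h2
    rw [← h2] at this
    exact_mod_cast this
  have hBi : (w.den : ℤ) ^ 6 * B = w.num ^ 6 * GG d.num (d.den : ℤ) := by
    have : (w.den : ℚ) ^ 6 * B = w.num ^ 6 * GG (d.num : ℚ) (d.den : ℚ) := by
      rw [← hwd, hB']; ring
    have h2 := cast_GG d.num (d.den : ℤ)
    push_cast at h2
    rw [← h2] at this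
    exact_mod_cast this
  have hcop : IsCoprime w.num (w.den : ℤ) := by
    rw [Int.isCoprime_iff_gcd_eq_one]; simpa [Int.gcd] using w.reduced
  have hnum : w.num.natAbs = 1 := by
    by_contra hne
    obtain ⟨p, hp, hpd⟩ := Nat.exists_prime_and_dvd hne
    have hpd' : (p : ℤ) ∣ w.num := Int.natCast_dvd.2 hpd
    have hc : IsCoprime (p : ℤ) (w.den : ℤ) := hcop.of_isCoprime_of_dvd_left hpd'
    refine hmin p hp ?_ ?_
    · refine (hc.pow (m := 4) (n := 4)).dvd_of_dvd_mul_left ?_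
      rw [hAi]; exact (pow_dvd_pow_of_dvd hpd' 4).mul_right _
    · refine (hc.pow (m := 6) (n := 6)).dvd_of_dvd_mul_left ?_
      rw [hBi]; exact (pow_dvd_pow_of_dvd hpd' 6).mul_right _
  have hsq : w.num ^ 2 = 1 := by
    rw [← Int.natAbs_sq, hnum]; rfl
  have h4 : w.num ^ 4 = 1 := by rw [show w.num ^ 4 = (w.num ^ 2) ^ 2 by ring, hsq]; rfl
  have h6 : w.num ^ 6 = 1 := by rw [show w.num ^ 6 = (w.num ^ 2) ^ 3 by ring, hsq]; rfl
  rw [h4, one_mul] at hAi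
  rw [h6, one_mul] at hBi
  refine ⟨d.num, d.den, w.den, by exact_mod_cast w.den_pos, ?_, hAi, hBi⟩
  refine Int.le_of_dvd (by norm_num) (n_dvd ?_ hAi hBi)
  rw [Int.isCoprime_iff_gcd_eq_one]; simpa [Int.gcd] using d.reduced

lemma size_aux {U V : ℤ → ℤ → ℤ} (hU : HB 11 U) (hV : HB 7 V) :
    ∃ K : ℝ, 1 ≤ K ∧ ∀ (t s n A B : ℤ) (Z M : ℝ) (m : ℤ), 0 ≤ Z → 0 < n → n ≤ 54432 →
      n ^ 4 * A = FF t s → n ^ 6 * B = GG t s → |(A : ℝ)| ≤ Z ^ 8 → |(B : ℝ)| ≤ Z ^ 12 →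
      U t s * c4 t s + V t s * c6 t s = 1008 * m ^ 19 →
      |(t : ℝ)| ≤ M → |(s : ℝ)| ≤ M → |(m : ℝ)| = M → M ≤ K * Z := by
  obtain ⟨C, hC, hU⟩ := hU
  obtain ⟨D, hD, hV⟩ := hV
  refine ⟨1 + C * 54432 ^ 4 + D * 54432 ^ 6, by
    have : 0 ≤ C * 54432 ^ 4 := by positivity
    have : 0 ≤ D * 54432 ^ 6 := by positivity
    linarith, ?_⟩
  intro t s n A B Z M m hZ hn0 hn hA hB hAZ hBZ hbez ht hs hm
  set K : ℝ := 1 + C * 54432 ^ 4 + D * 54432 ^ 6 with hK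
  have hC' : 0 ≤ C * 54432 ^ 4 := by positivity
  have hD' : 0 ≤ D * 54432 ^ 6 := by positivity
  have hK1 : 1 ≤ K := by linarith
  by_contra! hlt
  have hM : 0 < M := lt_of_le_of_lt (by positivity) hlt
  have hn0' : (0 : ℝ) < n := by exact_mod_cast hn0
  have hn' : (n : ℝ) ≤ 54432 := by exact_mod_cast hn
  have hc4 : |((c4 t s : ℤ) : ℝ)| ≤ 54432 ^ 4 * Z ^ 8 := by
    have e : (n : ℝ) ^ 4 * A = -27 * ((c4 t s : ℤ) : ℝ) := by
      rw [FF] at hA; exact_mod_cast hA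
    have e2 : (n : ℝ) ^ 4 * |(A : ℝ)| = 27 * |((c4 t s : ℤ) : ℝ)| := by
      have := congrArg abs e
      rwa [abs_mul, abs_mul, abs_of_pos (by positivity : (0 : ℝ) < (n : ℝ) ^ 4), abs_neg,
        abs_of_pos (by norm_num : (0 : ℝ) < 27)] at this
    have e3 : (n : ℝ) ^ 4 * |(A : ℝ)| ≤ 54432 ^ 4 * Z ^ 8 := by gcongr
    have := abs_nonneg ((c4 t s : ℤ) : ℝ)
    linarith
  have hc6 : |((c6 t s : ℤ) : ℝ)| ≤ 54432 ^ 6 * Z ^ 12 := by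
    have e : (n : ℝ) ^ 6 * B = -54 * ((c6 t s : ℤ) : ℝ) := by
      rw [GG] at hB; exact_mod_cast hB
    have e2 : (n : ℝ) ^ 6 * |(B : ℝ)| = 54 * |((c6 t s : ℤ) : ℝ)| := by
      have := congrArg abs e
      rwa [abs_mul, abs_mul, abs_of_pos (by positivity : (0 : ℝ) < (n : ℝ) ^ 6), abs_neg,
        abs_of_pos (by norm_num : (0 : ℝ) < 54)] at this
    have e3 : (n : ℝ) ^ 6 * |(B : ℝ)| ≤ 54432 ^ 6 * Z ^ 12 := by gcongr
    have := abs_nonneg ((c6 t s : ℤ) : ℝ)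
    linarith
  have hZM : Z ≤ M := by nlinarith
  have hb : 1008 * M ^ 19 ≤ C * M ^ 11 * (54432 ^ 4 * Z ^ 8) + D * M ^ 7 * (54432 ^ 6 * Z ^ 12) := by
    have e : (U t s : ℝ) * c4 t s + V t s * c6 t s = 1008 * m ^ 19 := by exact_mod_cast hbez
    have e2 : |(1008 * m ^ 19 : ℝ)| = 1008 * M ^ 19 := by
      rw [abs_mul, abs_pow, hm]; norm_num
    rw [← e2, ← e]
    refine (abs_add_le _ _).trans ?_
    rw [abs_mul, abs_mul]
    have := hU t s M ht hs
    have := hV t s M ht hs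
    gcongr
  have h12 : M ^ 7 * Z ^ 12 ≤ M ^ 11 * Z ^ 8 := by
    have : Z ^ 4 ≤ M ^ 4 := by gcongr
    calc M ^ 7 * Z ^ 12 = M ^ 7 * Z ^ 8 * Z ^ 4 := by ring
      _ ≤ M ^ 7 * Z ^ 8 * M ^ 4 := by gcongr
      _ = _ := by ring
  have h3 : 1008 * M ^ 19 ≤ K * (M ^ 11 * Z ^ 8) := by
    have a1 : D * 54432 ^ 6 * (M ^ 7 * Z ^ 12) ≤ D * 54432 ^ 6 * (M ^ 11 * Z ^ 8) := by gcongr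
    have a2 : 0 ≤ M ^ 11 * Z ^ 8 := by positivity
    rw [hK]; linarith
  have h4 : K * (M ^ 11 * Z ^ 8) ≤ M ^ 19 := by
    have b1 : K * Z ^ 8 ≤ (K * Z) ^ 8 := by
      rw [mul_pow]
      have : K ≤ K ^ 8 := le_self_pow₀ hK1 (by norm_num)
      gcongr
    have b2 : (K * Z) ^ 8 ≤ M ^ 8 := by gcongr
    calc K * (M ^ 11 * Z ^ 8) = M ^ 11 * (K * Z ^ 8) := by ring
      _ ≤ M ^ 11 * M ^ 8 := by gcongr; exact b1.trans b2
      _ = _ := by ring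
  have : 0 < M ^ 19 := by positivity
  linarith

/-- The parameters are `O(X^{1/4})`. -/
lemma size_lemma : ∃ K : ℝ, 1 ≤ K ∧ ∀ (t s n A B : ℤ) (Z : ℝ), 0 ≤ Z → 0 < n → n ≤ 54432 →
      n ^ 4 * A = FF t s → n ^ 6 * B = GG t s → |(A : ℝ)| ≤ Z ^ 8 → |(B : ℝ)| ≤ Z ^ 12 →
      |(t : ℝ)| ≤ K * Z ∧ |(s : ℝ)| ≤ K * Z := by
  obtain ⟨K1, hK1, h1⟩ := size_aux HB_U1 HB_V1
  obtain ⟨K2, hK2, h2⟩ := size_aux HB_U2 HB_V2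
  refine ⟨max K1 K2, le_max_of_le_left hK1, ?_⟩
  intro t s n A B Z hZ hn0 hn hA hB hAZ hBZ
  rcases le_total |(t : ℝ)| |(s : ℝ)| with h | h
  · have := h2 t s n A B Z _ s hZ hn0 hn hA hB hAZ hBZ (bez2 t s) h le_rfl rfl
    have e : |(s : ℝ)| ≤ max K1 K2 * Z := this.trans (by gcongr; exact le_max_right _ _)
    exact ⟨h.trans e, e⟩
  · have := h1 t s n A B Z _ t hZ hn0 hn hA hB hAZ hBZ (bez1 t s) le_rfl h rfl
    have e : |(t : ℝ)| ≤ max K1 K2 * Z := this.trans (by gcongr; exact le_max_left _ _)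
    exact ⟨e, h.trans e⟩

/-- Box inclusion giving the upper bound. -/
lemma upper_subset {S : Set (ℤ × ℤ)} {m : ℕ} (h : ∀ q ∈ S, ∃ t s n : ℤ, 0 < n ∧ n ≤ 54432 ∧
    n ^ 4 * q.1 = FF t s ∧ n ^ 6 * q.2 = GG t s ∧ |t| ≤ m ∧ |s| ≤ m) :
    S.Finite ∧ S.ncard ≤ (2 * m + 1) ^ 2 * 54432 := by
  classical
  let T : Finset (ℤ × ℤ × ℤ) := Finset.Icc (-m : ℤ) m ×ˢ (Finset.Icc (-m : ℤ) m ×ˢ Finset.Icc 1 54432)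
  let φ : ℤ × ℤ × ℤ → ℤ × ℤ := fun x => (FF x.1 x.2.1 / x.2.2 ^ 4, GG x.1 x.2.1 / x.2.2 ^ 6)
  have hsub : S ⊆ (T.image φ : Finset (ℤ × ℤ)) := by
    intro q hq
    obtain ⟨t, s, n, hn0, hn, hA, hB, ht, hs⟩ := h q hq
    rw [Finset.mem_coe, Finset.mem_image]
    refine ⟨(t, s, n), ?_, ?_⟩
    · simp only [T, Finset.mem_product, Finset.mem_Icc]
      exact ⟨abs_le.1 ht, abs_le.1 hs, by omega, hn⟩
    · simp only [φ]
      rw [← hA, ← hB, Int.mul_ediv_cancel_left _ (by positivity),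
        Int.mul_ediv_cancel_left _ (by positivity)]
  refine ⟨(Finset.finite_toSet _).subset hsub, ?_⟩
  refine (Set.ncard_le_ncard hsub (Finset.finite_toSet _)).trans ?_
  rw [Set.ncard_coe_finset]
  refine Finset.card_image_le.trans ?_
  simp only [T, Finset.card_product, Int.card_Icc]
  apply le_of_eq
  have : ((m : ℤ) + 1 - -m).toNat = 2 * m + 1 := by omega
  have h2 : ((54432 : ℤ) + 1 - 1).toNat = 54432 := rfl
  rw [this, h2]
  ring

/-- Reduction to a minimal pair. -/
lemma exists_minimal (N : ℕ) : ∀ F G : ℤ, F.natAbs + G.natAbs ≤ N → (F ≠ 0 ∨ G ≠ 0) →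
    ∃ n A B : ℤ, 0 < n ∧ n ^ 4 * A = F ∧ n ^ 6 * B = G ∧
      ∀ p : ℕ, p.Prime → (p : ℤ) ^ 4 ∣ A → ¬ (p : ℤ) ^ 6 ∣ B := by
  induction N with
  | zero => intro F G h h'; omega
  | succ N ih =>
    intro F G h h'
    by_cases hmin : ∀ p : ℕ, p.Prime → (p : ℤ) ^ 4 ∣ F → ¬ (p : ℤ) ^ 6 ∣ G
    · exact ⟨1, F, G, one_pos, by simp, by simp, hmin⟩
    · push Not at hmin
      obtain ⟨p, hp, ⟨F', hF⟩, ⟨G', hG⟩⟩ := hmin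
      have h2 := hp.two_le
      have hne : F' ≠ 0 ∨ G' ≠ 0 := by
        by_contra! hc
        rw [hF, hG, hc.1, hc.2] at h'
        simp at h'
      have e1 : 2 * F'.natAbs ≤ F.natAbs := by
        rw [hF, Int.natAbs_mul, Int.natAbs_pow, Int.natAbs_natCast]
        have : 2 ≤ p ^ 4 := h2.trans (Nat.le_self_pow (by norm_num) p)
        gcongr
      have e2 : 2 * G'.natAbs ≤ G.natAbs := by
        rw [hG, Int.natAbs_mul, Int.natAbs_pow, Int.natAbs_natCast]
        have : 2 ≤ p ^ 6 := h2.trans (Nat.le_self_pow (by norm_num) p)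
        gcongr
      obtain ⟨n, A, B, hn, hA, hB, hm⟩ := ih F' G' (by omega) hne
      refine ⟨p * n, A, B, mul_pos (by exact_mod_cast hp.pos) hn, ?_, ?_, hm⟩
      · rw [hF, ← hA]; ring
      · rw [hG, ← hB]; ring

/-- Elementary bound for the sum of inverse squares. -/
lemma sum_inv_sq (m : ℕ) : ∑ g ∈ Finset.Icc 2 (m + 2), (1 : ℝ) / (g : ℝ) ^ 2 ≤ 3 / 4 - 1 / (m + 2) := by
  induction m with
  | zero => norm_num
  | succ m ih =>
    rw [show m + 1 + 2 = (m + 2) + 1 by ring, Finset.sum_Icc_succ_top (by omega)]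
    refine (add_le_add_left ih _).trans ?_
    push_cast
    have h : (1 : ℝ) / (m + 2 + 1) ^ 2 ≤ 1 / (m + 2) - 1 / (m + 1 + 2) := by
      rw [div_sub_div _ _ (by positivity) (by positivity), div_le_div_iff₀ (by positivity) (by positivity)]
      nlinarith [(Nat.cast_nonneg m : (0 : ℝ) ≤ m)]
    linarith

/-- Coprime pairs in a box. -/
def cop (Y : ℕ) : Finset (ℕ × ℕ) :=
  (Finset.Icc 1 Y ×ˢ Finset.Icc 1 Y).filter (fun q => Nat.Coprime q.1 q.2)

lemma card_cop (Y : ℕ) : (Y : ℝ) ^ 2 / 4 ≤ (cop Y).card := by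
  classical
  rcases Nat.lt_or_ge Y 2 with hY | hY
  · interval_cases Y
    · simp
    · have : cop 1 = {(1, 1)} := by decide
      rw [this]; norm_num
  let bad : Finset (ℕ × ℕ) := (Finset.Icc 2 Y).biUnion (fun g =>
    (Finset.Icc 1 (Y / g) ×ˢ Finset.Icc 1 (Y / g)).image (fun q => (g * q.1, g * q.2)))
  have hcov : Finset.Icc 1 Y ×ˢ Finset.Icc 1 Y ⊆ cop Y ∪ bad := by
    rintro ⟨a, b⟩ hab
    rw [Finset.mem_union]
    by_cases hc : Nat.Coprime a b
    · left; simp only [cop, Finset.mem_filter]; exact ⟨hab, hc⟩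
    · right
      simp only [Finset.mem_product, Finset.mem_Icc] at hab
      obtain ⟨⟨ha1, ha2⟩, hb1, hb2⟩ := hab
      have hg0 : 0 < Nat.gcd a b := Nat.gcd_pos_of_pos_left _ ha1
      have hg1 : Nat.gcd a b ≠ 1 := hc
      have hga := Nat.gcd_dvd_left a b
      have hgb := Nat.gcd_dvd_right a b
      simp only [bad, Finset.mem_biUnion, Finset.mem_image]
      refine ⟨Nat.gcd a b, ?_, (a / Nat.gcd a b, b / Nat.gcd a b), ?_, ?_⟩
      · rw [Finset.mem_Icc]
        exact ⟨by omega, (Nat.le_of_dvd ha1 hga).trans ha2⟩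
      · simp only [Finset.mem_product, Finset.mem_Icc]
        exact ⟨⟨Nat.div_pos (Nat.le_of_dvd ha1 hga) hg0, Nat.div_le_div_right ha2⟩,
          Nat.div_pos (Nat.le_of_dvd hb1 hgb) hg0, Nat.div_le_div_right hb2⟩
      · simp only [Nat.mul_div_cancel' hga, Nat.mul_div_cancel' hgb]
  have h1 : Y ^ 2 ≤ (cop Y).card + bad.card := by
    have := (Finset.card_le_card hcov).trans (Finset.card_union_le _ _)
    rw [Finset.card_product, Nat.card_Icc] at this
    simpa [sq] using this
  have h2 : (bad.card : ℝ) ≤ (Y : ℝ) ^ 2 * (3 / 4) := by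
    have a1 : (bad.card : ℝ) ≤ ∑ g ∈ Finset.Icc 2 Y, (Y : ℝ) ^ 2 * (1 / (g : ℝ) ^ 2) := by
      have : bad.card ≤ ∑ g ∈ Finset.Icc 2 Y, (Y / g) ^ 2 := by
        refine Finset.card_biUnion_le.trans (Finset.sum_le_sum fun g _ => ?_)
        refine Finset.card_image_le.trans ?_
        rw [Finset.card_product, Nat.card_Icc]
        simp [sq]
      refine (Nat.cast_le.2 this).trans ?_
      push_cast
      refine Finset.sum_le_sum fun g hg => ?_
      rw [mul_one_div, ← div_pow]
      have := @Nat.cast_div_le ℝ _ _ _ Y g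
      gcongr
    rw [← Finset.mul_sum] at a1
    obtain ⟨m, rfl⟩ := Nat.exists_eq_add_of_le' hY
    have := sum_inv_sq m
    have h0 : (0 : ℝ) ≤ 1 / (m + 2) := by positivity
    refine a1.trans ?_
    gcongr
    linarith
  have h1' : (Y : ℝ) ^ 2 ≤ (cop Y).card + bad.card := by exact_mod_cast h1
  linarith

open Polynomial in
/-- The polynomial whose roots parametrize a fibre. -/
noncomputable def fibPoly (A B : ℤ) : ℚ[X] :=
  C ((A : ℚ) ^ 3) * GG (X : ℚ[X]) 1 ^ 2 - C ((B : ℚ) ^ 2) * FF (X : ℚ[X]) 1 ^ 3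

open Polynomial in
lemma fibPoly_eval (A B : ℤ) (d : ℚ) : (fibPoly A B).eval d = A ^ 3 * GG d 1 ^ 2 - B ^ 2 * FF d 1 ^ 3 := by
  simp [fibPoly, GG, FF, c4, c6]

open Polynomial in
lemma fibPoly_deg (A B : ℤ) : (fibPoly A B).natDegree ≤ 24 := by
  simp only [fibPoly, GG, FF, c4_expand, c6_expand, one_pow, mul_one]
  compute_degree

lemma fibPoly_ne (A B : ℤ) (h : 4 * A ^ 3 + 27 * B ^ 2 ≠ 0) : fibPoly A B ≠ 0 := by
  intro h0
  have := fibPoly_eval A B 0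
  rw [h0] at this
  simp only [GG, FF, c4, c6] at this
  apply h
  have e : (4 * A ^ 3 + 27 * B ^ 2 : ℚ) = 0 := by
    simp at this
    linarith
  exact_mod_cast e

lemma disc_ne {t s : ℕ} (ht : 0 < t) (hs : 0 < s) (h : Nat.Coprime t s) :
    4 * FF ((t : ℤ) + s) (s : ℤ) ^ 3 + 27 * GG ((t : ℤ) + s) (s : ℤ) ^ 2 ≠ 0 := by
  rw [disc_eq]
  have hodd : ((t : ℤ) + s) ^ 3 - 8 * ((t : ℤ) + s) ^ 2 * s + 5 * ((t : ℤ) + s) * s ^ 2 + s ^ 3 ≠ 0 := by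
    intro h0
    have h2 : ((((t : ℤ) + s) ^ 3 - 8 * ((t : ℤ) + s) ^ 2 * s + 5 * ((t : ℤ) + s) * s ^ 2 + s ^ 3 : ℤ) : ZMod 2) = 0 := by
      rw [h0]; rfl
    push_cast at h2
    have key : ∀ x y : ZMod 2, (x + y) ^ 3 - 8 * (x + y) ^ 2 * y + 5 * (x + y) * y ^ 2 + y ^ 3 = 0 →
      x = 0 ∧ y = 0 := by decide
    obtain ⟨k1, k2⟩ := key _ _ h2
    rw [ZMod.natCast_eq_zero_iff] at k1 k2
    exact Nat.not_coprime_of_dvd_of_dvd (by norm_num) k1 k2 h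
  have : (t : ℤ) ≠ 0 := by omega
  have : (s : ℤ) ≠ 0 := by omega
  have : (t : ℤ) + s ≠ 0 := by omega
  rw [add_sub_cancel_right]
  positivity

/-- Lower bound: the family injects with bounded fibres. -/
lemma lower_count (Y : ℕ) (S : Set (ℤ × ℤ)) (hS : S.Finite)
    (hmem : ∀ t s : ℕ, 0 < t → 0 < s → t ≤ Y → s ≤ Y → Nat.Coprime t s → ∀ n A B : ℤ, 0 < n →
      n ^ 4 * A = FF ((t : ℤ) + s) (s : ℤ) → n ^ 6 * B = GG ((t : ℤ) + s) (s : ℤ) →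
      (∀ p : ℕ, p.Prime → (p : ℤ) ^ 4 ∣ A → ¬ (p : ℤ) ^ 6 ∣ B) → (A, B) ∈ S) :
    (Y : ℝ) ^ 2 / 4 ≤ 24 * (S.ncard : ℝ) := by
  classical
  have hex : ∀ q : ℕ × ℕ, ∃ r : ℤ × ℤ, q ∈ cop Y → r ∈ S ∧ 4 * r.1 ^ 3 + 27 * r.2 ^ 2 ≠ 0 ∧
      (fibPoly r.1 r.2).eval ((q.1 : ℚ) / q.2 + 1) = 0 := by
    intro q
    by_cases hq : q ∈ cop Y
    swap
    · exact ⟨0, fun h => absurd h hq⟩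
    obtain ⟨t, s⟩ := q
    simp only [cop, Finset.mem_filter, Finset.mem_product, Finset.mem_Icc] at hq
    obtain ⟨⟨⟨ht1, ht2⟩, hs1, hs2⟩, hc⟩ := hq
    have hd := disc_ne ht1 hs1 hc
    have hne : FF ((t : ℤ) + s) (s : ℤ) ≠ 0 ∨ GG ((t : ℤ) + s) (s : ℤ) ≠ 0 := by
      by_contra! h0
      rw [h0.1, h0.2] at hd
      simp at hd
    obtain ⟨n, A, B, hn, hA, hB, hm⟩ := exists_minimal _ _ _ le_rfl hne
    refine ⟨(A, B), fun _ => ⟨hmem t s ht1 hs1 ht2 hs2 hc n A B hn hA hB hm, ?_, ?_⟩⟩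
    · intro h0
      simp only at h0
      apply hd
      rw [← hA, ← hB]
      linear_combination n ^ 12 * h0
    · have hs0 : (s : ℚ) ≠ 0 := by exact_mod_cast (by omega : s ≠ 0)
      have hn0 : (n : ℚ) ≠ 0 := by exact_mod_cast hn.ne'
      have e1 : ((t : ℚ) / s + 1) * s = t + s := by field_simp
      have hA' : (n : ℚ) ^ 4 * A = s ^ 8 * FF ((t : ℚ) / s + 1) 1 := by
        rw [← FF_scale, e1]
        have := cast_FF ((t : ℤ) + s) s
        rw [← hA] at this
        push_cast at this
        exact this
      have hB' : (n : ℚ) ^ 6 * B = s ^ 12 * GG ((t : ℚ) / s + 1) 1 := by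
        rw [← GG_scale, e1]
        have := cast_GG ((t : ℤ) + s) s
        rw [← hB] at this
        push_cast at this
        exact this
      rw [fibPoly_eval]
      dsimp only
      have : (s : ℚ) ^ 24 * (A ^ 3 * GG ((t : ℚ) / s + 1) 1 ^ 2 - B ^ 2 * FF ((t : ℚ) / s + 1) 1 ^ 3) = 0 := by
        calc _ = (A : ℚ) ^ 3 * (s ^ 12 * GG ((t : ℚ) / s + 1) 1) ^ 2
              - B ^ 2 * (s ^ 8 * FF ((t : ℚ) / s + 1) 1) ^ 3 := by ring
          _ = 0 := by rw [← hA', ← hB']; ring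
      exact (mul_eq_zero.1 this).resolve_left (pow_ne_zero _ hs0)
  choose ψ hψ using hex
  have himg : (cop Y).image ψ ⊆ hS.toFinset := by
    intro r hr
    obtain ⟨q, hq, rfl⟩ := Finset.mem_image.1 hr
    rw [Set.Finite.mem_toFinset]
    exact (hψ q hq).1
  have hfib : ∀ r ∈ (cop Y).image ψ, ((cop Y).filter (fun q => ψ q = r)).card ≤ 24 := by
    intro r hr
    obtain ⟨q0, hq0, rfl⟩ := Finset.mem_image.1 hr
    have hne := fibPoly_ne _ _ (hψ q0 hq0).2.1
    refine le_trans ?_ ((Polynomial.card_roots' _).trans (fibPoly_deg (ψ q0).1 (ψ q0).2))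
    refine le_trans ?_ (Multiset.toFinset_card_le _)
    refine Finset.card_le_card_of_injOn (fun q => (q.1 : ℚ) / q.2 + 1) ?_ ?_
    · intro q hq
      rw [Finset.mem_coe, Finset.mem_filter] at hq
      rw [Finset.mem_coe, Multiset.mem_toFinset, Polynomial.mem_roots hne, Polynomial.IsRoot]
      rw [← hq.2]
      exact (hψ q hq.1).2.2
    · rintro ⟨t, s⟩ hq ⟨t', s'⟩ hq' heq
      rw [Finset.mem_coe, Finset.mem_filter] at hq hq'
      have hq := hq.1
      have hq' := hq'.1
      simp only [cop, Finset.mem_filter, Finset.mem_product, Finset.mem_Icc] at hq hq'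
      obtain ⟨⟨⟨ht1, ht2⟩, hs1, hs2⟩, hc⟩ := hq
      obtain ⟨⟨⟨ht1', ht2'⟩, hs1', hs2'⟩, hc'⟩ := hq'
      simp only [add_left_inj] at heq
      have hs0 : (s : ℚ) ≠ 0 := by exact_mod_cast (by omega : s ≠ 0)
      have hs0' : (s' : ℚ) ≠ 0 := by exact_mod_cast (by omega : s' ≠ 0)
      rw [div_eq_div_iff hs0 hs0'] at heq
      have heq' : t * s' = t' * s := by exact_mod_cast heq
      have d1 : s ∣ s' := hc.symm.dvd_of_dvd_mul_left ⟨t', by rw [heq']; ring⟩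
      have d2 : s' ∣ s := hc'.symm.dvd_of_dvd_mul_left ⟨t, by rw [← heq']; ring⟩
      have es := Nat.dvd_antisymm d1 d2
      subst es
      have := Nat.eq_of_mul_eq_mul_right hs1 heq'
      rw [this]
  have h1 : (cop Y).card ≤ 24 * ((cop Y).image ψ).card :=
    Finset.card_le_mul_card_image _ _ hfib
  have h2 : ((cop Y).image ψ).card ≤ S.ncard := by
    rw [Set.ncard_eq_toFinset_card S hS]
    exact Finset.card_le_card himg
  have h3 : ((cop Y).card : ℝ) ≤ 24 * S.ncard := by exact_mod_cast h1.trans (by gcongr)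
  exact (card_cop Y).trans h3

lemma member_point {t s : ℕ} (ht : 0 < t) (hs : 0 < s) (hc : Nat.Coprime t s) {n A B : ℤ}
    (hn : 0 < n) (hA : n ^ 4 * A = FF ((t : ℤ) + s) (s : ℤ))
    (hB : n ^ 6 * B = GG ((t : ℤ) + s) (s : ℤ)) :
    4 * A ^ 3 + 27 * B ^ 2 ≠ 0 ∧ ∃ P : (EAB A B).Point, P ≠ 0 ∧ 7 • P = 0 := by
  have hd := disc_ne ht hs hc
  have hD : 4 * A ^ 3 + 27 * B ^ 2 ≠ 0 := by
    intro h0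
    apply hd
    rw [← hA, ← hB]
    linear_combination n ^ 12 * h0
  refine ⟨hD, ?_⟩
  have hs0 : (s : ℚ) ≠ 0 := by exact_mod_cast hs.ne'
  have ht0 : (t : ℚ) ≠ 0 := by exact_mod_cast ht.ne'
  have hn0 : (n : ℚ) ≠ 0 := by exact_mod_cast hn.ne'
  have e1 : ((t : ℚ) / s + 1) * s = t + s := by field_simp
  have hA' : (n : ℚ) ^ 4 * A = s ^ 8 * FF ((t : ℚ) / s + 1) 1 := by
    rw [← FF_scale, e1]
    have := cast_FF ((t : ℤ) + s) s
    rw [← hA] at this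
    push_cast at this
    exact this
  have hB' : (n : ℚ) ^ 6 * B = s ^ 12 * GG ((t : ℚ) / s + 1) 1 := by
    rw [← GG_scale, e1]
    have := cast_GG ((t : ℤ) + s) s
    rw [← hB] at this
    push_cast at this
    exact this
  refine exists_point (u := (s : ℚ) ^ 2 / n) (d := (t : ℚ) / s + 1) (by positivity) (by positivity)
    ?_ ?_ ?_ hD
  · have : (t : ℚ) / s ≠ 0 := by positivity
    simpa using this
  · apply mul_left_cancel₀ (pow_ne_zero 4 hn0)
    rw [hA']; field_simp
  · apply mul_left_cancel₀ (pow_ne_zero 6 hn0)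
    rw [hB']; field_simp

lemma height_iff {A B : ℤ} {X Z : ℝ} (hZ : 0 ≤ Z) (hX : X = Z ^ 4) :
    max ((|A| : ℝ) ^ 3) ((|B| : ℝ) ^ 2) ≤ X ^ 6 ↔ |(A : ℝ)| ≤ Z ^ 8 ∧ |(B : ℝ)| ≤ Z ^ 12 := by
  rw [max_le_iff, hX, show (Z ^ 4) ^ 6 = (Z ^ 8) ^ 3 by ring,
    pow_le_pow_iff_left₀ (abs_nonneg _) (by positivity) (by norm_num),
    show (Z ^ 8) ^ 3 = (Z ^ 12) ^ 2 by ring,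
    pow_le_pow_iff_left₀ (abs_nonneg _) (by positivity) (by norm_num)]

lemma abs_le_of_mul {n A F : ℤ} {k : ℕ} (hn : 0 < n) (h : n ^ k * A = F) :
    |(A : ℝ)| ≤ |(F : ℝ)| := by
  have : |A| ≤ |F| := by
    rw [← h, abs_mul, abs_of_pos (pow_pos hn k)]
    have : 1 ≤ n ^ k := one_le_pow₀ (by omega)
    nlinarith [abs_nonneg A]
  exact_mod_cast this

end SevenTorsion

open SevenTorsion in
theorem count_seven_torsion_curves :
    ∃ c₁ c₂ : ℝ, 0 < c₁ ∧ 0 < c₂ ∧ ∃ X₀ : ℝ, ∀ X : ℝ, X₀ ≤ X →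
      c₁ * Real.sqrt X ≤
        (Set.ncard {q : ℤ × ℤ | 4 * q.1 ^ 3 + 27 * q.2 ^ 2 ≠ 0 ∧
          (∀ p : ℕ, p.Prime → (p : ℤ) ^ 4 ∣ q.1 → ¬ (p : ℤ) ^ 6 ∣ q.2) ∧
          max ((|q.1| : ℝ) ^ 3) ((|q.2| : ℝ) ^ 2) ≤ X ^ 6 ∧
          ∃ P : (EAB q.1 q.2).Point, P ≠ 0 ∧ 7 • P = 0} : ℝ) ∧
      (Set.ncard {q : ℤ × ℤ | 4 * q.1 ^ 3 + 27 * q.2 ^ 2 ≠ 0 ∧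
          (∀ p : ℕ, p.Prime → (p : ℤ) ^ 4 ∣ q.1 → ¬ (p : ℤ) ^ 6 ∣ q.2) ∧
          max ((|q.1| : ℝ) ^ 3) ((|q.2| : ℝ) ^ 2) ≤ X ^ 6 ∧
          ∃ P : (EAB q.1 q.2).Point, P ≠ 0 ∧ 7 • P = 0} : ℝ) ≤ c₂ * Real.sqrt X := by
  obtain ⟨K, hK, hsize⟩ := size_lemma
  obtain ⟨C, hC, hc4⟩ := HB_c4
  obtain ⟨D, hD, hc6⟩ := HB_c6
  obtain ⟨L, hL⟩ : ∃ L, L = 1 + 27 * C + 54 * D := ⟨_, rfl⟩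
  have hL1 : 1 ≤ L := by linarith
  have hL0 : 0 < L := by linarith
  refine ⟨1 / (16 * L ^ 2 * 96), (2 * K + 1) ^ 2 * 54432, by positivity, by positivity,
    (4 * L) ^ 4, fun X hX => ?_⟩
  obtain ⟨Z, hZdef⟩ : ∃ Z, Z = Real.sqrt (Real.sqrt X) := ⟨_, rfl⟩
  have hX0 : 0 ≤ X := le_trans (by positivity) hX
  have hZ0 : 0 ≤ Z := by rw [hZdef]; positivity
  have hZ2 : Real.sqrt X = Z ^ 2 := by rw [hZdef, Real.sq_sqrt (Real.sqrt_nonneg _)]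
  have hZ4 : X = Z ^ 4 := by
    rw [show Z ^ 4 = (Z ^ 2) ^ 2 by ring, ← hZ2, Real.sq_sqrt hX0]
  have hZL : 4 * L ≤ Z := by
    rw [hZ4] at hX
    exact (pow_le_pow_iff_left₀ (by positivity) hZ0 (by norm_num)).1 hX
  have hZ1 : 1 ≤ Z := by linarith
  set S : Set (ℤ × ℤ) := {q : ℤ × ℤ | 4 * q.1 ^ 3 + 27 * q.2 ^ 2 ≠ 0 ∧
          (∀ p : ℕ, p.Prime → (p : ℤ) ^ 4 ∣ q.1 → ¬ (p : ℤ) ^ 6 ∣ q.2) ∧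
          max ((|q.1| : ℝ) ^ 3) ((|q.2| : ℝ) ^ 2) ≤ X ^ 6 ∧
          ∃ P : (EAB q.1 q.2).Point, P ≠ 0 ∧ 7 • P = 0} with hS
  rw [hZ2]
  obtain ⟨hfin, hup⟩ := upper_subset (S := S) (m := ⌊K * Z⌋₊) (by
    rintro ⟨A, B⟩ ⟨_, hmin, hht, hP⟩
    rw [height_iff hZ0 hZ4] at hht
    obtain ⟨t, s, n, hn0, hn, hA, hB⟩ := shape_lemma hmin hP
    obtain ⟨h1, h2⟩ := hsize t s n A B Z hZ0 hn0 hn hA hB hht.1 hht.2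
    have conv : ∀ x : ℤ, |(x : ℝ)| ≤ K * Z → |x| ≤ (⌊K * Z⌋₊ : ℤ) := by
      intro x hx
      rw [Int.abs_eq_natAbs]
      have : x.natAbs ≤ ⌊K * Z⌋₊ := Nat.le_floor (by rwa [Nat.cast_natAbs, Int.cast_abs])
      exact_mod_cast this
    exact ⟨t, s, n, hn0, hn, hA, hB, conv t h1, conv s h2⟩)
  constructor
  · have hlow := lower_count ⌊Z / (2 * L)⌋₊ S hfin (by
      intro t s ht hs htY hsY hc n A B hn hA hB hmin
      obtain ⟨hD', hP⟩ := member_point ht hs hc hn hA hB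
      refine ⟨hD', hmin, ?_, hP⟩
      rw [height_iff hZ0 hZ4]
      have hfl : ∀ x : ℕ, x ≤ ⌊Z / (2 * L)⌋₊ → (x : ℝ) ≤ Z / L / 2 := by
        intro x hx
        have : (x : ℝ) ≤ Z / (2 * L) := (Nat.le_floor_iff (by positivity)).1 hx
        rwa [mul_comm, ← div_div] at this
      have b1 := hfl t htY
      have b2 := hfl s hsY
      have p1 : (0 : ℝ) ≤ t := by positivity
      have p2 : (0 : ℝ) ≤ s := by positivity
      have q1 : |(((t : ℤ) + s : ℤ) : ℝ)| ≤ Z / L := by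
        push_cast; rw [abs_of_nonneg (by positivity)]; linarith
      have q2 : |((s : ℤ) : ℝ)| ≤ Z / L := by
        push_cast; rw [abs_of_nonneg (by positivity)]; linarith
      have g4 := hc4 _ _ _ q1 q2
      have g6 := hc6 _ _ _ q1 q2
      have l8 : L ≤ L ^ 8 := le_self_pow₀ hL1 (by norm_num)
      have l12 : L ≤ L ^ 12 := le_self_pow₀ hL1 (by norm_num)
      constructor
      · refine (abs_le_of_mul hn hA).trans ?_
        rw [FF]; push_cast
        rw [abs_mul, abs_neg, abs_of_pos (by norm_num : (0 : ℝ) < 27)]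
        refine (mul_le_mul_of_nonneg_left g4 (by norm_num)).trans ?_
        rw [div_pow, ← mul_div_assoc, ← mul_div_assoc, div_le_iff₀ (by positivity), mul_comm (Z ^ 8),
          ← mul_assoc]
        gcongr
        linarith
      · refine (abs_le_of_mul hn hB).trans ?_
        rw [GG]; push_cast
        rw [abs_mul, abs_neg, abs_of_pos (by norm_num : (0 : ℝ) < 54)]
        refine (mul_le_mul_of_nonneg_left g6 (by norm_num)).trans ?_
        rw [div_pow, ← mul_div_assoc, ← mul_div_assoc, div_le_iff₀ (by positivity), mul_comm (Z ^ 12),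
          ← mul_assoc]
        gcongr
        linarith)
    have hY : Z / (4 * L) ≤ (⌊Z / (2 * L)⌋₊ : ℝ) := by
      have h1 := (Nat.lt_floor_add_one (Z / (2 * L))).le
      have h2 : Z / (2 * L) = 2 * (Z / (4 * L)) := by field_simp; ring
      have h3 : 1 ≤ Z / (4 * L) := by rwa [le_div_iff₀ (by positivity), one_mul]
      linarith
    have hY2 : (Z / (4 * L)) ^ 2 ≤ (⌊Z / (2 * L)⌋₊ : ℝ) ^ 2 := by gcongr
    have e : 1 / (16 * L ^ 2 * 96) * Z ^ 2 = (Z / (4 * L)) ^ 2 / 96 := by field_simp; ring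
    rw [e]
    linarith
  · have h1 : (S.ncard : ℝ) ≤ (2 * (⌊K * Z⌋₊ : ℝ) + 1) ^ 2 * 54432 := by exact_mod_cast hup
    refine h1.trans ?_
    have h2 : (⌊K * Z⌋₊ : ℝ) ≤ K * Z := Nat.floor_le (by positivity)
    have h3 : 2 * (⌊K * Z⌋₊ : ℝ) + 1 ≤ (2 * K + 1) * Z := by linarith
    calc (2 * (⌊K * Z⌋₊ : ℝ) + 1) ^ 2 * 54432 ≤ ((2 * K + 1) * Z) ^ 2 * 54432 := by gcongr
      _ = _ := by ring
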